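/- Let M ≥ 2 be an integer, f : ℤ → ℂ a function with f(n+M) = f(n) for all n ∈ ℤ and ∑_{m=1}^{M} f(m) = 0, ν ∈ {0,1}, and b a positive real number. For each integer n ≥ 0 set C_n := (−1)^(n+1) · (M^(2n+ν)/(2n+ν+1)) · ∑_{m=1}^{M} f(m) · B_{2n+ν+1}(m/M), where B_j denotes the j-th Bernoulli polynomial. Then for every integer N ≥ 0 there exist δ > 0 and K > 0 such that for all real t with 0 < t < δ, |∑_{n=1}^∞ n^ν f(n) e^(−t n²/b) − ∑_{n=0}^{N} (C_n/(b^n n!)) t^n| ≤ K · t^(N+1). In other words, ∑_{n≥1} n^ν f(n) e^(−t n²/b) has the asymptotic expansion ∑_{n≥0} (C_n/(b^n n!)) t^n as t → 0⁺. -/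

import Mathlib

noncomputable def Hp : ℕ → Polynomial ℝ
  | 0 => 1
  | k + 1 => Polynomial.derivative (Hp k) - 2 * Polynomial.X * Hp k

noncomputable def Ek (k : ℕ) (x : ℝ) : ℝ := (Hp k).eval x * Real.exp (-x ^ 2)

lemma Ek_hasDeriv (k : ℕ) (x : ℝ) : HasDerivAt (Ek k) (Ek (k + 1) x) x := by
  have h1 := (Hp k).hasDerivAt x
  have h2 : HasDerivAt (fun x : ℝ => Real.exp (-x ^ 2)) (Real.exp (-x ^ 2) * (-(2 * x))) x := by
    have := ((hasDerivAt_pow 2 x).neg).exp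
    simpa using this
  have := h1.mul h2
  refine this.congr_deriv ?_
  simp only [Ek, Hp, Polynomial.eval_sub, Polynomial.eval_mul, Polynomial.eval_X,
    Polynomial.eval_ofNat]
  ring

lemma Hp_rec (k : ℕ) : Hp (k + 2) =
    -2 * Polynomial.X * Hp (k + 1) - 2 * ((k : Polynomial ℝ) + 1) * Hp k := by
  induction k with
  | zero => simp [Hp]; ring
  | succ k ih =>
    have h : Hp (k + 1) = Polynomial.derivative (Hp k) - 2 * Polynomial.X * Hp k := rfl
    have h2 : Hp (k + 1 + 2) =
      Polynomial.derivative (Hp (k + 2)) - 2 * Polynomial.X * Hp (k + 2) := rfl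
    have h3 : Hp (k + 2) =
      Polynomial.derivative (Hp (k + 1)) - 2 * Polynomial.X * Hp (k + 1) := rfl
    have h4 : Polynomial.derivative (Hp (k + 2)) = -2 * Hp (k + 1)
        - 2 * Polynomial.X * Polynomial.derivative (Hp (k + 1))
        - 2 * ((k : Polynomial ℝ) + 1) * Polynomial.derivative (Hp k) := by
      rw [ih]
      simp
      ring
    rw [h2, h4]
    have h5 : Polynomial.derivative (Hp k) = Hp (k + 1) + 2 * Polynomial.X * Hp k := by
      rw [h]; ring
    have h6 : Polynomial.derivative (Hp (k + 1)) = Hp (k + 2) + 2 * Polynomial.X * Hp (k + 1) := by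
      rw [h3]; ring
    rw [h5, h6, show k + 1 + 1 = k + 2 from rfl, ih]
    push_cast
    ring

lemma Hp_zero_odd (n : ℕ) : (Hp (2 * n + 1)).eval 0 = 0 := by
  induction n with
  | zero => simp [Hp]
  | succ n ih =>
    rw [show 2 * (n + 1) + 1 = (2 * n + 1) + 2 by ring, Hp_rec]
    simp [ih]

lemma Hp_zero_even (n : ℕ) : (Hp (2 * n)).eval 0 =
    (-1) ^ n * ((2 * n).factorial : ℝ) / (n.factorial : ℝ) := by
  induction n with
  | zero => simp [Hp]
  | succ n ih =>
    rw [show 2 * (n + 1) = (2 * n) + 2 by ring, Hp_rec]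
    simp only [Polynomial.eval_sub, Polynomial.eval_mul, Polynomial.eval_add,
      Polynomial.eval_natCast, Polynomial.eval_X, Polynomial.eval_ofNat, ih, Polynomial.eval_one]
    rw [Nat.factorial_succ (2 * n + 1), Nat.factorial_succ (2 * n), Nat.factorial_succ n]
    have := Nat.factorial_ne_zero n
    push_cast
    field_simp
    ring

lemma poly_bound (P : Polynomial ℝ) :
    ∃ C : ℝ, 0 ≤ C ∧ ∀ x : ℝ, 0 ≤ x → |P.eval x| * Real.exp (-x ^ 2) ≤ C := by
  induction P using Polynomial.induction_on' with
  | add p q hp hq =>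
    obtain ⟨C, hC0, hC⟩ := hp
    obtain ⟨D, hD0, hD⟩ := hq
    refine ⟨C + D, by positivity, fun x hx => ?_⟩
    have := abs_add_le (p.eval x) (q.eval x)
    rw [Polynomial.eval_add]
    have h := Real.exp_pos (-x ^ 2)
    nlinarith [hC x hx, hD x hx, mul_le_mul_of_nonneg_right this h.le]
  | monomial n a =>
    refine ⟨|a| * (n.factorial * Real.exp 1), by positivity, fun x hx => ?_⟩
    rw [Polynomial.eval_monomial, abs_mul, abs_of_nonneg (pow_nonneg hx n), mul_assoc]
    refine mul_le_mul_of_nonneg_left ?_ (abs_nonneg a)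
    have h1 := Real.pow_div_factorial_le_exp x hx n
    rw [div_le_iff₀ (by positivity)] at h1
    calc x ^ n * Real.exp (-x ^ 2) ≤ (Real.exp x * n.factorial) * Real.exp (-x ^ 2) := by gcongr
      _ = n.factorial * Real.exp (x - x ^ 2) := by rw [sub_eq_add_neg, Real.exp_add]; ring
      _ ≤ n.factorial * Real.exp 1 := by
        gcongr
        nlinarith [sq_nonneg (x - 1)]

lemma Ek_bound (k : ℕ) : ∃ C : ℝ, 0 ≤ C ∧ ∀ x : ℝ, 0 ≤ x → |Ek k x| ≤ C / (1 + x ^ 2) := by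
  obtain ⟨C, h0, h⟩ := poly_bound ((1 + Polynomial.X ^ 2) * Hp k)
  refine ⟨C, h0, fun x hx => ?_⟩
  rw [le_div_iff₀ (by positivity)]
  have := h x hx
  rw [Polynomial.eval_mul, abs_mul] at this
  simp only [Polynomial.eval_add, Polynomial.eval_one, Polynomial.eval_pow,
    Polynomial.eval_X] at this
  rw [abs_of_pos (by positivity : (0:ℝ) < 1 + x ^ 2)] at this
  rw [Ek, abs_mul, abs_of_pos (Real.exp_pos _)]
  linarith

lemma taylor_aux (n : ℕ) : ∀ (D : ℕ → ℝ → ℝ) (_ : ∀ k x, HasDerivAt (D k) (D (k + 1) x) x)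
    (B : ℝ) (_ : ∀ y, 0 ≤ y → y ≤ 1 → |D n y| ≤ B) (y : ℝ) (_ : 0 ≤ y) (_ : y ≤ 1),
    |D 0 y - ∑ i ∈ Finset.range n, D i 0 * (y ^ i / (i.factorial : ℝ))| ≤ B := by
  induction n with
  | zero => intro D hD B hB y h0 h1; simpa using hB y h0 h1
  | succ n ih =>
    intro D hD B hB y h0 h1
    have hB0 : 0 ≤ B := (abs_nonneg _).trans (hB 0 le_rfl zero_le_one)
    have key := ih (fun k => D (k + 1)) (fun k x => hD (k + 1) x) B hB
    set r : ℝ → ℝ := fun y => D 0 y - ∑ i ∈ Finset.range (n + 1), D i 0 * (y ^ i / (i.factorial : ℝ))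
      with hr
    have hd : ∀ x, HasDerivAt r (D 1 x - ∑ i ∈ Finset.range n,
        D (i + 1) 0 * (x ^ i / (i.factorial : ℝ))) x := by
      intro x
      refine (hD 0 x).sub ?_
      have : ∀ i ∈ Finset.range (n + 1), HasDerivAt
          (fun y : ℝ => D i 0 * (y ^ i / (i.factorial : ℝ)))
          (D i 0 * ((i * x ^ (i - 1)) / (i.factorial : ℝ))) x := fun i _ =>
        ((hasDerivAt_pow i x).div_const _).const_mul _
      refine (HasDerivAt.fun_sum this).congr_deriv ?_
      rw [Finset.sum_range_succ']
      simp only [Nat.cast_zero, zero_mul, zero_div, mul_zero, add_zero]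
      refine Finset.sum_congr rfl fun i _ => ?_
      rw [Nat.factorial_succ]
      have := Nat.factorial_ne_zero i
      push_cast
      try simp only [Nat.add_sub_cancel]
      have h : (i : ℝ) + 1 ≠ 0 := by positivity
      field_simp
    have hr0 : r 0 = 0 := by
      simp [hr, Finset.sum_range_succ']
    have := (convex_Icc (0:ℝ) 1).norm_image_sub_le_of_norm_hasDerivWithin_le
      (f := r) (C := B) (fun x hx => (hd x).hasDerivWithinAt)
      (fun x hx => by simpa using key x hx.1 hx.2) (x := 0) (y := y) (by simp) ⟨h0, h1⟩
    rw [hr0, sub_zero, Real.norm_eq_abs, sub_zero, Real.norm_eq_abs, abs_of_nonneg h0] at this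
    exact this.trans (by nlinarith)

lemma taylor_aux' (K k : ℕ) (hk : k < K) (D : ℕ → ℝ → ℝ)
    (hD : ∀ k x, HasDerivAt (D k) (D (k + 1) x) x)
    (B : ℝ) (hB : ∀ y, 0 ≤ y → y ≤ 1 → |D K y| ≤ B) :
    |D k 1 - D k 0 - ∑ d ∈ Finset.Ico (k + 1) K, D d 0 / ((d - k).factorial : ℝ)| ≤ B := by
  have := taylor_aux (K - k) (fun i => D (k + i)) (fun i x => hD (k + i) x) B
    (by intro y h0 h1; simpa [Nat.add_sub_cancel' hk.le] using hB y h0 h1) 1 zero_le_one le_rfl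
  have h2 : ∑ i ∈ Finset.range (K - k), D (k + i) 0 * (1 ^ i / (i.factorial : ℝ))
      = D k 0 + ∑ d ∈ Finset.Ico (k + 1) K, D d 0 / ((d - k).factorial : ℝ) := by
    have h3 := Finset.sum_eq_sum_Ico_succ_bot hk (fun d => D d 0 / ((d - k).factorial : ℝ))
    rw [Finset.sum_Ico_eq_sum_range] at h3
    simp only [Nat.add_sub_cancel_left, Nat.sub_self, Nat.factorial_zero, Nat.cast_one,
      div_one] at h3
    rw [← h3]
    refine Finset.sum_congr rfl fun i _ => ?_
    rw [one_pow, mul_one_div]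
  rw [h2] at this
  simpa [sub_sub] using this

lemma bern_id (d : ℕ) (x : ℚ) : x ^ d / (d.factorial : ℚ) = ∑ k ∈ Finset.range (d + 1),
    (Polynomial.bernoulli k).eval x / (k.factorial : ℚ) / ((d + 1 - k).factorial : ℚ) := by
  have h := congrArg (Polynomial.eval x) (Polynomial.sum_bernoulli d)
  simp only [Polynomial.eval_finsetSum, Polynomial.eval_smul, Polynomial.eval_monomial,
    smul_eq_mul] at h
  have hd : ((d : ℚ) + 1) ≠ 0 := by positivity
  have hd' : (d.factorial : ℚ) ≠ 0 := by exact_mod_cast Nat.factorial_ne_zero d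
  have h1 : x ^ d / (d.factorial : ℚ) = ((d + 1 : ℚ) * x ^ d) / ((d + 1).factorial : ℚ) := by
    rw [Nat.factorial_succ]
    push_cast
    field_simp
  rw [h1, ← h, Finset.sum_div]
  refine Finset.sum_congr rfl fun k hk => ?_
  have hk' : k ≤ d + 1 := by have := Finset.mem_range.1 hk; omega
  rw [Nat.cast_choose ℚ hk']
  have a1 : ((d + 1).factorial : ℚ) ≠ 0 := by exact_mod_cast Nat.factorial_ne_zero _
  have a2 : (k.factorial : ℚ) ≠ 0 := by exact_mod_cast Nat.factorial_ne_zero _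
  have a3 : ((d + 1 - k).factorial : ℚ) ≠ 0 := by exact_mod_cast Nat.factorial_ne_zero _
  field_simp

lemma block {ι : Type*} (S : Finset ι) (w : ι → ℂ) (x : ι → ℚ) (hx : ∀ i ∈ S, 0 ≤ x i ∧ x i ≤ 1)
    (hw : ∑ i ∈ S, w i = 0) (β : ℕ → ℂ)
    (hβ : ∀ k, β k = ∑ i ∈ S, w i *
      (((Polynomial.bernoulli k).eval (x i) : ℚ) : ℂ) / (k.factorial : ℂ))
    (K : ℕ) (D : ℕ → ℝ → ℝ) (hD : ∀ k x, HasDerivAt (D k) (D (k + 1) x) x)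
    (B : ℝ) (hB : ∀ y, 0 ≤ y → y ≤ 1 → |D K y| ≤ B) :
    ‖∑ i ∈ S, w i * (D 0 (x i) : ℂ) -
      ∑ k ∈ Finset.range K, β (k + 1) * ((D k 1 : ℂ) - (D k 0 : ℂ))‖ ≤
      (∑ i ∈ S, ‖w i‖ + ∑ k ∈ Finset.range K, ‖β (k + 1)‖) * B := by
  have hβ0 : β 0 = 0 := by rw [hβ]; simp [hw]
  have hmom : ∀ d, ∑ i ∈ S, w i * ((x i : ℂ) ^ d / (d.factorial : ℂ)) =
      ∑ k ∈ Finset.range d, β (k + 1) / ((d - k).factorial : ℂ) := by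
    intro d
    have h1 : ∀ i ∈ S, w i * ((x i : ℂ) ^ d / (d.factorial : ℂ)) =
        ∑ k ∈ Finset.range (d + 1), w i * (((Polynomial.bernoulli k).eval (x i) : ℚ) : ℂ)
          / (k.factorial : ℂ) / ((d + 1 - k).factorial : ℂ) := by
      intro i _
      have := congrArg (fun q : ℚ => (q : ℂ)) (bern_id d (x i))
      push_cast at this
      rw [this, Finset.mul_sum]
      refine Finset.sum_congr rfl fun k _ => ?_
      ring
    rw [Finset.sum_congr rfl h1, Finset.sum_comm]
    have h2 : ∀ k ∈ Finset.range (d + 1), ∑ i ∈ S, w i *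
        (((Polynomial.bernoulli k).eval (x i) : ℚ) : ℂ)
          / (k.factorial : ℂ) / ((d + 1 - k).factorial : ℂ) =
        β k / ((d + 1 - k).factorial : ℂ) := fun k _ => by rw [← Finset.sum_div, ← hβ]
    rw [Finset.sum_congr rfl h2, Finset.sum_range_succ', hβ0]
    simp
  have hsplit : ∑ i ∈ S, w i * (∑ d ∈ Finset.range K, (D d 0 : ℂ) * ((x i : ℂ) ^ d / (d.factorial : ℂ)))
      = ∑ k ∈ Finset.range K, β (k + 1) *
        ∑ d ∈ Finset.Ico (k + 1) K, (D d 0 : ℂ) / ((d - k).factorial : ℂ) := by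
    calc _ = ∑ d ∈ Finset.range K, (D d 0 : ℂ) *
          ∑ i ∈ S, w i * ((x i : ℂ) ^ d / (d.factorial : ℂ)) := by
          simp_rw [Finset.mul_sum]
          rw [Finset.sum_comm]
          refine Finset.sum_congr rfl fun k _ => Finset.sum_congr rfl fun i _ => ?_
          ring
      _ = _ := by
          simp_rw [hmom, Finset.mul_sum]
          rw [Finset.sum_comm' (t' := Finset.range K) (s' := fun k => Finset.Ico (k + 1) K)]
          · refine Finset.sum_congr rfl fun k _ => Finset.sum_congr rfl fun i _ => ?_
            ring
          · intro a b; simp; omega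
  have e : ∑ i ∈ S, w i * (D 0 (x i) : ℂ) -
      ∑ k ∈ Finset.range K, β (k + 1) * ((D k 1 : ℂ) - (D k 0 : ℂ)) =
      ∑ i ∈ S, w i * ((D 0 (x i) - ∑ d ∈ Finset.range K, D d 0 * ((x i : ℝ) ^ d / (d.factorial : ℝ)) : ℝ) : ℂ)
      - ∑ k ∈ Finset.range K, β (k + 1) *
        ((D k 1 - D k 0 - ∑ d ∈ Finset.Ico (k + 1) K, D d 0 / ((d - k).factorial : ℝ) : ℝ) : ℂ) := by
    push_cast
    simp_rw [mul_sub, Finset.sum_sub_distrib]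
    rw [hsplit]
    ring
  rw [e, add_mul, Finset.sum_mul, Finset.sum_mul]
  refine (norm_sub_le _ _).trans (add_le_add ?_ ?_)
  · refine (norm_sum_le _ _).trans (Finset.sum_le_sum fun i hi => ?_)
    rw [norm_mul, Complex.norm_real]
    refine mul_le_mul_of_nonneg_left ?_ (norm_nonneg _)
    exact taylor_aux K D hD B hB _ (by exact_mod_cast (hx i hi).1) (by exact_mod_cast (hx i hi).2)
  · refine (norm_sum_le _ _).trans (Finset.sum_le_sum fun k hk => ?_)
    rw [norm_mul, Complex.norm_real]
    refine mul_le_mul_of_nonneg_left ?_ (norm_nonneg _)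
    exact taylor_aux' K k (Finset.mem_range.1 hk) D hD B hB

lemma G_exists (ν : ℕ) (hν : ν = 0 ∨ ν = 1) : ∃ G : ℕ → ℝ → ℝ,
    (∀ k x, HasDerivAt (G k) (G (k + 1) x) x) ∧
    (∀ k, ∃ C : ℝ, 0 ≤ C ∧ ∀ x : ℝ, 0 ≤ x → |G k x| ≤ C / (1 + x ^ 2)) ∧
    (∀ x, G 0 x = x ^ ν * Real.exp (-x ^ 2)) ∧
    (∀ n, G (2 * n + ν) 0 = (-1) ^ n * ((2 * n + ν).factorial : ℝ) / (n.factorial : ℝ)) ∧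
    (∀ n, G (2 * n + 1 - ν) 0 = 0) := by
  rcases hν with rfl | rfl
  · refine ⟨Ek, Ek_hasDeriv, Ek_bound, fun x => by simp [Ek, Hp], fun n => ?_, fun n => ?_⟩
    · simp [Ek, Hp_zero_even]
    · simp [Ek, Hp_zero_odd]
  · refine ⟨fun k x => -(1 / 2) * Ek (k + 1) x, fun k x => (Ek_hasDeriv (k + 1) x).const_mul _,
      fun k => ?_, fun x => by simp [Ek, Hp]; ring, fun n => ?_, fun n => ?_⟩
    · obtain ⟨C, h0, h⟩ := Ek_bound (k + 1)
      refine ⟨C, h0, fun x hx => ?_⟩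
      rw [abs_mul]
      have := h x hx
      have h2 := abs_nonneg (Ek (k + 1) x)
      have h3 : |(-(1 / 2) : ℝ)| = 1 / 2 := by norm_num
      rw [h3]
      linarith
    · have h := Hp_zero_even (n + 1)
      rw [show 2 * (n + 1) = 2 * n + 1 + 1 by ring] at h
      simp only [Ek, h]
      rw [Nat.factorial_succ (2 * n + 1), Nat.factorial_succ n]
      have := Nat.factorial_ne_zero n
      push_cast
      simp
      field_simp
      ring
    · simp [Ek, Hp_zero_odd]

lemma sum_parity (ν : ℕ) (hν : ν = 0 ∨ ν = 1) (F : ℕ → ℂ) (hF : ∀ n, F (2 * n + 1 - ν) = 0)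
    (L : ℕ) : ∑ k ∈ Finset.range (2 * L + ν), F k = ∑ n ∈ Finset.range L, F (2 * n + ν) := by
  induction L with
  | zero =>
    rcases hν with rfl | rfl
    · simp
    · simpa using hF 0
  | succ L ih =>
    rw [Finset.sum_range_succ, ← ih, show 2 * (L + 1) + ν = 2 * L + ν + 1 + 1 by ring,
      Finset.sum_range_succ, Finset.sum_range_succ]
    have : F (2 * L + ν + 1) = 0 := by
      rcases hν with rfl | rfl
      · exact hF L
      · exact hF (L + 1)
    rw [this, add_zero]

lemma core (M : ℕ) (hM : 2 ≤ M) (f : ℤ → ℂ)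
    (hf : ∀ n : ℤ, f (n + M) = f n) (hmean : ∑ m ∈ Finset.Icc 1 M, f (m : ℤ) = 0)
    (β : ℕ → ℂ)
    (hβ : ∀ k, β k = ∑ m ∈ Finset.Icc 1 M, f (m : ℤ) *
      (((Polynomial.bernoulli k).eval ((m : ℚ) / (M : ℚ)) : ℚ) : ℂ) / (k.factorial : ℂ))
    (G : ℕ → ℝ → ℝ) (hG : ∀ k x, HasDerivAt (G k) (G (k + 1) x) x)
    (hGb : ∀ k, ∃ C : ℝ, 0 ≤ C ∧ ∀ x : ℝ, 0 ≤ x → |G k x| ≤ C / (1 + x ^ 2)) (K : ℕ) :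
    ∃ A : ℝ, 0 ≤ A ∧ ∀ s : ℝ, 0 < s → s ≤ 1 →
      ‖∑' n : ℕ, f ((n : ℤ) + 1) * (G 0 (s * ((n : ℝ) + 1)) : ℂ) +
        ∑ k ∈ Finset.range (K + 2), β (k + 1) * (((s * M) ^ k * G k 0 : ℝ) : ℂ)‖ ≤ A * s ^ K := by
  have hM0 : (0 : ℝ) < M := by exact_mod_cast (by omega : 0 < M)
  have hM1 : (1 : ℝ) ≤ M := by exact_mod_cast (by omega : 1 ≤ M)
  have hper : ∀ (j : ℕ) (n : ℤ), f (n + j * M) = f n := by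
    intro j
    induction j with
    | zero => intro n; simp
    | succ j ih =>
      intro n
      have := hf (n + j * M)
      rw [ih] at this
      rw [← this]
      congr 1
      push_cast
      ring
  have hz : Summable (fun j : ℕ => 1 / (1 + (j : ℝ) ^ 2)) := by
    rw [← summable_nat_add_iff 1]
    have h2 := (summable_nat_add_iff 1).2 (Real.summable_one_div_nat_pow.2 (by norm_num : 1 < 2))
    refine h2.of_nonneg_of_le (fun _ => by positivity) fun n => ?_
    apply one_div_le_one_div_of_le
    · positivity
    · linarith
  obtain ⟨F, hF0, hF⟩ : ∃ F : ℝ, 0 ≤ F ∧ ∀ n : ℕ, ‖f ((n : ℤ) + 1)‖ ≤ F := by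
    refine ⟨∑ m ∈ Finset.range M, ‖f ((m : ℤ) + 1)‖, by positivity, fun n => ?_⟩
    have h1 : f ((n : ℤ) + 1) = f (((n % M : ℕ) : ℤ) + 1) := by
      rw [← hper (n / M) (((n % M : ℕ) : ℤ) + 1)]
      congr 1
      have := Nat.mod_add_div n M
      have h2 : (n : ℤ) = ((n % M : ℕ) : ℤ) + (M : ℤ) * ((n / M : ℕ) : ℤ) := by exact_mod_cast this.symm
      linarith
    rw [h1]
    exact Finset.single_le_sum (f := fun m : ℕ => ‖f ((m : ℤ) + 1)‖) (fun _ _ => norm_nonneg _)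
      (Finset.mem_range.2 (Nat.mod_lt n (by omega)))
  obtain ⟨C, hC0, hC⟩ := hGb (K + 2)
  obtain ⟨C', hC0', hC'⟩ := hGb 0
  set W : ℝ := ∑ m ∈ Finset.Icc 1 M, ‖f (m : ℤ)‖ + ∑ k ∈ Finset.range (K + 2), ‖β (k + 1)‖ with hW
  have hW0 : 0 ≤ W := by positivity
  set Z : ℝ := ∑' j : ℕ, 1 / (1 + (j : ℝ) ^ 2) with hZ
  have hZ0 : 0 ≤ Z := tsum_nonneg fun _ => by positivity
  refine ⟨W * (M ^ (K + 2) * C) * Z, by positivity, fun s hs hs1 => ?_⟩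
  set T : ℕ → ℂ := fun n => f ((n : ℤ) + 1) * (G 0 (s * ((n : ℝ) + 1)) : ℂ) with hT
  -- elementary inequality
  have hel : ∀ x : ℝ, 1 / (1 + (s * x) ^ 2) ≤ (1 / s ^ 2) * (1 / (1 + x ^ 2)) := by
    intro x
    rw [div_mul_div_comm, one_mul]
    apply one_div_le_one_div_of_le
    · positivity
    · nlinarith [sq_nonneg x]
  have hTs : Summable T := by
    have : Summable fun n : ℕ => F * (C' * ((1 / s ^ 2) * (1 / (1 + (n : ℝ) ^ 2)))) :=
      ((hz.mul_left _).mul_left _).mul_left _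
    refine Summable.of_norm_bounded this fun n => ?_
    rw [hT]
    simp only
    rw [norm_mul, Complex.norm_real]
    refine mul_le_mul (hF n) ?_ (norm_nonneg _) hF0
    refine (hC' _ (by positivity)).trans ?_
    rw [div_eq_mul_one_div]
    refine mul_le_mul_of_nonneg_left ?_ hC0'
    refine le_trans ?_ (hel n)
    apply one_div_le_one_div_of_le
    · positivity
    · have : (n : ℝ) ≤ n + 1 := by linarith
      gcongr
  have hblock : ∀ j : ℕ, ‖∑ i ∈ Finset.range M, T (M * j + i) -
      ∑ k ∈ Finset.range (K + 2), β (k + 1) *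
        ((((s * M) ^ k * G k (s * M * ((j + 1 : ℕ) : ℝ)) : ℝ) : ℂ)
          - (((s * M) ^ k * G k (s * M * (j : ℝ)) : ℝ) : ℂ))‖ ≤
      W * (M ^ (K + 2) * C) * s ^ K * (1 / (1 + (j : ℝ) ^ 2)) := by
    intro j
    have hb := block (Finset.Icc 1 M) (fun m => f (m : ℤ)) (fun m => (m : ℚ) / (M : ℚ))
      (by
        intro m hm
        rw [Finset.mem_Icc] at hm
        have : (0 : ℚ) < M := by exact_mod_cast (by omega : 0 < M)
        refine ⟨by positivity, ?_⟩
        rw [div_le_one this]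
        exact_mod_cast hm.2)
      hmean β hβ (K + 2) (fun k y => (s * M) ^ k * G k (s * M * (j + y)))
      (by
        intro k y
        have h1 : HasDerivAt (fun y : ℝ => s * M * (j + y)) (s * M) y := by
          simpa using ((hasDerivAt_id y).const_add (j : ℝ)).const_mul (s * M)
        have h2 := ((hG k (s * M * (j + y))).comp y h1).const_mul ((s * M) ^ k)
        refine h2.congr_deriv ?_
        ring)
      (M ^ (K + 2) * C * s ^ K * (1 / (1 + (j : ℝ) ^ 2)))
      (by
        intro y hy0 hy1
        rw [abs_mul, abs_of_nonneg (by positivity : 0 ≤ (s * M) ^ (K + 2))]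
        have h1 := hC (s * M * (j + y)) (by positivity)
        have h2 : C / (1 + (s * M * (j + y)) ^ 2) ≤ C * ((1 / s ^ 2) * (1 / (1 + (j : ℝ) ^ 2))) := by
          rw [div_eq_mul_one_div]
          refine mul_le_mul_of_nonneg_left ?_ hC0
          refine le_trans ?_ (hel j)
          apply one_div_le_one_div_of_le
          · positivity
          · have : s * j ≤ s * M * (j + y) := by
              rw [mul_assoc]
              refine mul_le_mul_of_nonneg_left ?_ hs.le
              have hj : (0 : ℝ) ≤ j := by positivity
              nlinarith
            gcongr
        calc _ ≤ (s * M) ^ (K + 2) * (C * ((1 / s ^ 2) * (1 / (1 + (j : ℝ) ^ 2)))) :=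
              mul_le_mul_of_nonneg_left (h1.trans h2) (by positivity)
          _ = _ := by
              field_simp
              ring)
    have e1 : ∑ i ∈ Finset.range M, T (M * j + i) = ∑ m ∈ Finset.Icc 1 M, f (m : ℤ) *
        (((s * M) ^ 0 * G 0 (s * M * (j + (((m : ℚ) / (M : ℚ) : ℚ) : ℝ))) : ℝ) : ℂ) := by
      rw [← Finset.Ico_add_one_right_eq_Icc, Finset.sum_Ico_eq_sum_range]
      refine Finset.sum_congr (by simp) fun i _ => ?_
      rw [hT]
      simp only
      congr 1
      · rw [← hper j ((1 + i : ℕ) : ℤ)]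
        congr 1
        push_cast
        ring
      · rw [pow_zero, one_mul]
        congr 2
        push_cast
        field_simp
        ring
    rw [e1]
    simp only [add_zero] at hb
    refine le_trans (le_of_eq ?_) (hb.trans (le_of_eq ?_))
    · push_cast
      rfl
    · rw [hW]; ring
  have hpart : ∀ J : ℕ, ‖∑ i ∈ Finset.range (M * J), T i -
      ∑ k ∈ Finset.range (K + 2), β (k + 1) *
        ((((s * M) ^ k * G k (s * M * (J : ℝ)) : ℝ) : ℂ) - (((s * M) ^ k * G k 0 : ℝ) : ℂ))‖ ≤
      W * (M ^ (K + 2) * C) * s ^ K * ∑ j ∈ Finset.range J, (1 / (1 + (j : ℝ) ^ 2)) := by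
    intro J
    induction J with
    | zero => simp
    | succ J ih =>
      rw [Nat.mul_succ, Finset.sum_range_add, Finset.sum_range_succ _ J, mul_add]
      refine le_trans (le_of_eq ?_) ((norm_add_le _ _).trans (add_le_add ih (hblock J)))
      congr 1
      simp_rw [mul_sub, Finset.sum_sub_distrib]
      ring
  have hlim1 : Filter.Tendsto (fun J : ℕ => ∑ i ∈ Finset.range (M * J), T i) Filter.atTop
      (nhds (∑' n, T n)) :=
    hTs.hasSum.tendsto_sum_nat.comp
      (Filter.tendsto_id.const_mul_atTop' (by omega : 0 < M))
  have hsM : 0 < s * M := by positivity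
  have hGlim : ∀ k, Filter.Tendsto (fun J : ℕ => G k (s * M * (J : ℝ))) Filter.atTop (nhds 0) := by
    intro k
    obtain ⟨c, hc0, hc⟩ := hGb k
    have h1 : Filter.Tendsto (fun J : ℕ => s * M * (J : ℝ)) Filter.atTop Filter.atTop :=
      tendsto_natCast_atTop_atTop.const_mul_atTop hsM
    have h2 : Filter.Tendsto (fun x : ℝ => c / (1 + x ^ 2)) Filter.atTop (nhds 0) :=
      Filter.Tendsto.const_div_atTop
        (Filter.tendsto_atTop_add_const_left _ _ (Filter.tendsto_pow_atTop (by norm_num))) c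
    refine squeeze_zero_norm (fun J => ?_) (h2.comp h1)
    exact hc _ (by positivity)
  have hlim2 : Filter.Tendsto (fun J : ℕ => ∑ k ∈ Finset.range (K + 2), β (k + 1) *
        ((((s * M) ^ k * G k (s * M * (J : ℝ)) : ℝ) : ℂ) - (((s * M) ^ k * G k 0 : ℝ) : ℂ)))
      Filter.atTop (nhds (∑ k ∈ Finset.range (K + 2), β (k + 1) *
        ((((s * M) ^ k * 0 : ℝ) : ℂ) - (((s * M) ^ k * G k 0 : ℝ) : ℂ)))) := by
    refine tendsto_finsetSum _ fun k _ => Filter.Tendsto.const_mul _ (Filter.Tendsto.sub_const ?_ _)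
    exact (Complex.continuous_ofReal.tendsto _).comp ((hGlim k).const_mul _)
  have hfin := le_of_tendsto ((hlim1.sub hlim2).norm) (Filter.Eventually.of_forall fun J =>
    (hpart J).trans (mul_le_mul_of_nonneg_left
      (hz.sum_le_tsum (Finset.range J) fun _ _ => by positivity) (by positivity)))
  refine le_trans (le_of_eq ?_) (hfin.trans (le_of_eq ?_))
  · congr 1
    simp [Finset.sum_neg_distrib]
  · rw [hZ]; ring

/-- Let `f : ℤ → ℂ` be periodic of period `M ≥ 2` with mean zero,
`ν ∈ {0,1}` and `b > 0`.  With
`C_n = (−1)^(n+1) (M^(2n+ν)/(2n+ν+1)) ∑_{m=1}^M f(m) B_{2n+ν+1}(m/M)`,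
the partial theta series `∑_{n≥1} n^ν f(n) e^{−t n²/b}` has the asymptotic expansion
`∑_{n≥0} (C_n/(b^n n!)) t^n` as `t → 0⁺`. -/
theorem partial_theta_asymptotic_expansion (M : ℕ) (hM : 2 ≤ M) (f : ℤ → ℂ)
    (hf : ∀ n : ℤ, f (n + M) = f n) (hmean : ∑ m ∈ Finset.Icc 1 M, f (m : ℤ) = 0)
    (ν : ℕ) (hν : ν = 0 ∨ ν = 1) (b : ℝ) (hb : 0 < b)
    (C : ℕ → ℂ)
    (hC : ∀ n : ℕ, C n = (-1) ^ (n + 1) * ((M : ℂ) ^ (2 * n + ν) / (2 * n + ν + 1)) *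
      ∑ m ∈ Finset.Icc 1 M,
        f (m : ℤ) *
          (((Polynomial.bernoulli (2 * n + ν + 1)).eval ((m : ℚ) / (M : ℚ)) : ℚ) : ℂ)) :
    ∀ N : ℕ, ∃ δ > (0 : ℝ), ∃ K > (0 : ℝ), ∀ t : ℝ, 0 < t → t < δ →
      ‖(∑' n : ℕ, ((n : ℂ) + 1) ^ ν * f ((n : ℤ) + 1) *
            Complex.exp (-((t * ((n : ℝ) + 1) ^ 2 / b : ℝ) : ℂ))) -
          ∑ n ∈ Finset.range (N + 1),
            C n / ((b : ℂ) ^ n * (n.factorial : ℂ)) * (t : ℂ) ^ n‖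
        ≤ K * t ^ (N + 1) := by
  intro N
  have hM0 : (M : ℂ) ≠ 0 := by exact_mod_cast (by omega : M ≠ 0)
  obtain ⟨G, hG, hGb, hG0, hGe, hGo⟩ := G_exists ν hν
  set β : ℕ → ℂ := fun k => ∑ m ∈ Finset.Icc 1 M, f (m : ℤ) *
      (((Polynomial.bernoulli k).eval ((m : ℚ) / (M : ℚ)) : ℚ) : ℂ) / (k.factorial : ℂ) with hβ
  obtain ⟨A, hA0, hA⟩ := core M hM f hf hmean β (fun k => rfl) G hG hGb (2 * (N + 1) + ν)
  set c : ℕ → ℂ := fun n => C n / ((b : ℂ) ^ n * (n.factorial : ℂ)) with hc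
  refine ⟨b, hb, A / b ^ (N + 1) + ‖c (N + 1)‖ + 1, by positivity, fun t ht htb => ?_⟩
  set s : ℝ := Real.sqrt (t / b) with hs
  have hs0 : 0 < s := Real.sqrt_pos.2 (by positivity)
  have hs2 : s ^ 2 = t / b := Real.sq_sqrt (by positivity)
  have hs1 : s ≤ 1 := by
    rw [hs, Real.sqrt_le_one, div_le_one hb]
    exact htb.le
  have hsC : (s : ℂ) ≠ 0 := by exact_mod_cast hs0.ne'
  have hmain := hA s hs0 hs1
  have hterm : ∀ n : ℕ, f ((n : ℤ) + 1) * (G 0 (s * ((n : ℝ) + 1)) : ℂ) =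
      (s : ℂ) ^ ν * (((n : ℂ) + 1) ^ ν * f ((n : ℤ) + 1) *
            Complex.exp (-((t * ((n : ℝ) + 1) ^ 2 / b : ℝ) : ℂ))) := by
    intro n
    rw [hG0, mul_pow s, mul_pow s, hs2, show t / b * ((n : ℝ) + 1) ^ 2 = t * ((n : ℝ) + 1) ^ 2 / b by ring]
    push_cast
    ring
  simp_rw [hterm] at hmain
  rw [tsum_mul_left, show 2 * (N + 1) + ν + 2 = 2 * (N + 2) + ν by ring,
    sum_parity ν hν _ (fun n => by simp [hGo])] at hmain
  have hcoef : ∀ n : ℕ, β (2 * n + ν + 1) * (((s * M) ^ (2 * n + ν) * G (2 * n + ν) 0 : ℝ) : ℂ) =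
      - ((s : ℂ) ^ ν * (c n * (t : ℂ) ^ n)) := by
    intro n
    have h2 : (s : ℂ) ^ (2 * n + ν) = (s : ℂ) ^ ν * ((t : ℂ) ^ n / (b : ℂ) ^ n) := by
      have : (s : ℂ) ^ 2 = t / b := by exact_mod_cast hs2
      rw [pow_add, pow_mul, this, div_pow, mul_comm]
    rw [hc, hβ]
    simp only
    rw [hC, hGe, ← Finset.sum_div, Nat.factorial_succ]
    push_cast
    rw [mul_pow, h2, pow_succ (-1 : ℂ) n]
    have a1 : ((2 * n + ν).factorial : ℂ) ≠ 0 := by exact_mod_cast Nat.factorial_ne_zero _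
    have a2 : (n.factorial : ℂ) ≠ 0 := by exact_mod_cast Nat.factorial_ne_zero _
    have a3 : (2 * (n : ℂ) + ν + 1) ≠ 0 := by exact_mod_cast Nat.succ_ne_zero (2 * n + ν)
    have a4 : (b : ℂ) ≠ 0 := by exact_mod_cast hb.ne'
    field_simp
  simp_rw [hcoef] at hmain
  rw [Finset.sum_neg_distrib, ← Finset.mul_sum, ← sub_eq_add_neg, ← mul_sub, norm_mul, norm_pow,
    Complex.norm_real, Real.norm_of_nonneg hs0.le, pow_add s, pow_mul, hs2, ← mul_assoc,
    mul_comm (s ^ ν)] at hmain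
  have h3 := le_of_mul_le_mul_right hmain (pow_pos hs0 ν)
  rw [Finset.sum_range_succ, ← sub_sub] at h3
  have h4 := norm_sub_norm_le ((∑' n : ℕ, ((n : ℂ) + 1) ^ ν * f ((n : ℤ) + 1) *
            Complex.exp (-((t * ((n : ℝ) + 1) ^ 2 / b : ℝ) : ℂ))) -
          ∑ n ∈ Finset.range (N + 1), c n * (t : ℂ) ^ n) (c (N + 1) * (t : ℂ) ^ (N + 1))
  have h5 : ‖c (N + 1) * (t : ℂ) ^ (N + 1)‖ = ‖c (N + 1)‖ * t ^ (N + 1) := by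
    rw [norm_mul, norm_pow, Complex.norm_real, Real.norm_of_nonneg ht.le]
  have h6 : A * (t / b) ^ (N + 1) = A / b ^ (N + 1) * t ^ (N + 1) := by
    rw [div_pow]; ring
  have h7 : 0 < t ^ (N + 1) := by positivity
  rw [h5] at h4
  rw [h6] at h3
  have h8 : (A / b ^ (N + 1) + ‖c (N + 1)‖ + 1) * t ^ (N + 1) = A / b ^ (N + 1) * t ^ (N + 1)
    + ‖c (N + 1)‖ * t ^ (N + 1) + t ^ (N + 1) := by ring
  rw [h8]
  linarith
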